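/- Let K be a field and let A be a reduced finitely generated commutative K-algebra of pure Krull dimension one (i.e., dim A_M = 1 for every maximal ideal M and A has no minimal prime with zero-dimensional quotient) which is not integrally closed in Q(A). Then for every test ideal J for A, n(A, J) = max over P ∈ Sing(A) of n(A_P, P·A_P). In particular, n(A, J) does not depend on the choice of the test ideal J. -/

import Mathlib

set_option synthInstance.maxHeartbeats 1000000
set_option maxHeartbeats 1000000

open scoped nonZeroDivisors

noncomputable section

/-- Given an intermediate ring `B` with `A ⊆ B ⊆ Q(A)` and an ideal `I` of `B`, the
endomorphism ring `End_B(I) = {x ∈ Q(A) : x·I ⊆ I}`, as a subalgebra of `Q(A)`. -/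
def endStep (A : Type*) [CommRing A] (B : Subalgebra A (FractionRing A))
    (I : Ideal B) : Subalgebra A (FractionRing A) where
  carrier := {x : FractionRing A | ∀ j ∈ I,
    x * (j : FractionRing A) ∈ (fun b : B => (b : FractionRing A)) '' I}
  mul_mem' := by
    intro x y hx hy j hj
    obtain ⟨j', hj', heq⟩ := hy j hj
    rw [mul_assoc, ← heq]
    exact hx j' hj'
  one_mem' := by
    intro j hj
    exact ⟨j, hj, (one_mul _).symm⟩
  add_mem' := by
    intro x y hx hy j hj
    obtain ⟨j1, hj1, h1⟩ := hx j hj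
    obtain ⟨j2, hj2, h2⟩ := hy j hj
    refine ⟨j1 + j2, I.add_mem hj1 hj2, ?_⟩
    push_cast
    rw [add_mul, ← h1, ← h2]
  zero_mem' := by
    intro j hj
    exact ⟨0, I.zero_mem, by push_cast; rw [zero_mul]⟩
  algebraMap_mem' := by
    intro a j hj
    refine ⟨algebraMap A B a * j, I.mul_mem_left _ hj, ?_⟩
    push_cast
    rfl

/-- The Grauert–Remmert normalization chain inside `Q(A)`:
`A_0 = A` (the image of `A` in `Q(A)`), and
`A_{i+1} = End_{A_i}(√(J·A_i))`. -/
def chainRing (A : Type*) [CommRing A] (J : Ideal A) :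
    ℕ → Subalgebra A (FractionRing A)
  | 0 => ⊥
  | n + 1 =>
      endStep A (chainRing A J n)
        ((J.map (algebraMap A (chainRing A J n))).radical)

/-- The number of steps of the Grauert–Remmert-type normalization algorithm:
the least `n` with `A_n = A_{n+1}`. -/
def nSteps (A : Type*) [CommRing A] (J : Ideal A) : ℕ :=
  sInf {n | chainRing A J n = chainRing A J (n + 1)}

/-- The conductor of `A` in its integral closure inside `Q(A)`. -/
def conductorIdeal (A : Type*) [CommRing A] : Ideal A where
  carrier := {a : A | ∀ x ∈ integralClosure A (FractionRing A),
      algebraMap A (FractionRing A) a * x ∈ (algebraMap A (FractionRing A)).range}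
  add_mem' := by
    intro a b ha hb x hx
    rw [map_add, add_mul]
    exact add_mem (ha x hx) (hb x hx)
  zero_mem' := by
    intro x hx
    rw [map_zero, zero_mul]
    exact zero_mem _
  smul_mem' := by
    intro c a ha x hx
    obtain ⟨y, hy⟩ := ha x hx
    refine ⟨c * y, ?_⟩
    rw [map_mul, hy, smul_eq_mul, map_mul, mul_assoc]

/-- A test ideal for `A`. -/
def IsTestIdeal (A : Type*) [CommRing A] (J : Ideal A) : Prop :=
  (∃ g ∈ J, g ∈ A⁰) ∧ J.IsRadical ∧
    PrimeSpectrum.zeroLocus (conductorIdeal A : Set A) ⊆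
      PrimeSpectrum.zeroLocus (J : Set A)

/-- A Noetherian local ring is regular if its maximal ideal can be generated by
Krull-dimension-many elements. -/
def IsRegularLocal (R : Type*) [CommRing R] [IsLocalRing R] : Prop :=
  IsNoetherianRing R ∧ ∃ s : Finset R,
    Ideal.span (s : Set R) = IsLocalRing.maximalIdeal R ∧
      (s.card : WithBot ℕ∞) = ringKrullDim R

/-- The singular locus of `A`. -/
def singLocus (A : Type*) [CommRing A] : Set (PrimeSpectrum A) :=
  {P | ¬ IsRegularLocal (Localization.AtPrime P.asIdeal)}



universe u

theorem aux_root_field (K : Type u) [Field K] (N : ℕ) (hN : 0 < N) (s : Finset K) :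
    ∃ (K' : Type u) (_ : Field K') (_ : Algebra K K'), Module.Finite K K' ∧
      ∀ c ∈ s, ∃ d : K', d ^ N = algebraMap K K' c := by
  classical
  obtain ⟨g, hg⟩ : ∃ g : Polynomial K, g = ∏ c ∈ s, (Polynomial.X ^ N - Polynomial.C c) :=
    ⟨_, rfl⟩
  have hg0 : g ≠ 0 := by
    rw [hg]
    refine Finset.prod_ne_zero_iff.2 fun c _ => ?_
    exact Polynomial.X_pow_sub_C_ne_zero hN _
  refine ⟨g.SplittingField, inferInstance, inferInstance, inferInstance, ?_⟩
  intro c hc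
  have h1 := Polynomial.SplittingField.splits g
  have hdvd : (Polynomial.X ^ N - Polynomial.C c) ∣ g := by
    rw [hg]; exact Finset.dvd_prod_of_mem _ hc
  have h2 := h1.of_dvd (Polynomial.map_ne_zero hg0)
    (Polynomial.map_dvd (algebraMap K g.SplittingField) hdvd)
  obtain ⟨d, hd⟩ := h2.exists_eval_eq_zero (by
    rw [Polynomial.degree_map, Polynomial.degree_X_pow_sub_C hN]
    exact_mod_cast hN.ne')
  refine ⟨d, ?_⟩
  simpa [sub_eq_zero] using hd

theorem aux_root_ring (K : Type u) [Field K] (r q n : ℕ) [ExpChar K q]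
    (s : Finset (MvPolynomial (Fin r) K)) :
    ∃ (K' : Type u) (_ : Field K') (f : MvPolynomial (Fin r) K →+* MvPolynomial (Fin r) K'),
      f.Finite ∧ Function.Injective f ∧ ExpChar K' q ∧ ∀ c ∈ s, ∃ d, d ^ (q ^ n) = f c := by
  classical
  have hq : 0 < q := expChar_pos K q
  have hqn : q ^ n ≠ 0 := (pow_pos hq n).ne'
  obtain ⟨K', _, _, hfin, hroot0⟩ := aux_root_field K (q ^ n) (pow_pos hq n)
    (s.biUnion fun c => c.support.image fun m => MvPolynomial.coeff m c)
  have : ExpChar K' q := expChar_of_injective_algebraMap (algebraMap K K').injective q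
  have hroot : ∀ c ∈ s, ∀ m ∈ c.support, ∃ d : K', d ^ (q ^ n) =
      algebraMap K K' (MvPolynomial.coeff m c) := fun c hc m hm =>
    hroot0 _ (Finset.mem_biUnion.2 ⟨c, hc, Finset.mem_image_of_mem _ hm⟩)
  let f0 : MvPolynomial (Fin r) K →+* MvPolynomial (Fin r) K' :=
    ((MvPolynomial.expand (q ^ n)).toRingHom).comp (MvPolynomial.map (algebraMap K K'))
  have fC : ∀ a, f0 (MvPolynomial.C a) = MvPolynomial.C (algebraMap K K' a) := by
    intro a; simp [f0]
  have fX : ∀ i, f0 (MvPolynomial.X i) = (MvPolynomial.X i) ^ (q ^ n) := by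
    intro a; simp [f0]
  refine ⟨K', inferInstance, f0, ?_, ?_, inferInstance, ?_⟩
  · apply RingHom.IsIntegral.to_finite
    · intro x
      induction x using MvPolynomial.induction_on with
      | C a =>
        have ha : IsIntegral K a := Algebra.IsIntegral.isIntegral a
        obtain ⟨P, hP, hP2⟩ := ha
        refine ⟨P.map MvPolynomial.C, hP.map _, ?_⟩
        rw [Polynomial.eval₂_map]
        have : f0.comp MvPolynomial.C = MvPolynomial.C.comp (algebraMap K K') :=
          RingHom.ext fC
        rw [this, ← Polynomial.hom_eval₂, hP2, map_zero]
      | add p1 p2 h1 h2 => exact RingHom.IsIntegralElem.add f0 h1 h2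
      | mul_X p i h =>
        refine RingHom.IsIntegralElem.mul f0 h ?_
        refine ⟨Polynomial.X ^ (q ^ n) - Polynomial.C (MvPolynomial.X i),
          Polynomial.monic_X_pow_sub_C _ hqn, ?_⟩
        simp [fX]
    · have : (f0.comp MvPolynomial.C).FiniteType := by
        have e : f0.comp MvPolynomial.C = MvPolynomial.C.comp (algebraMap K K') :=
          RingHom.ext fC
        rw [e]
        have h1 : (MvPolynomial.C.comp (algebraMap K K')) =
          algebraMap K (MvPolynomial (Fin r) K') := rfl
        rw [h1, RingHom.finiteType_algebraMap]
        exact Algebra.FiniteType.trans (S := K') (inferInstance : Algebra.FiniteType K K')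
          (inferInstance : Algebra.FiniteType K' (MvPolynomial (Fin r) K'))
      exact RingHom.FiniteType.of_comp_finiteType this
  · refine Function.Injective.comp (g := MvPolynomial.expand (R := K') (σ := Fin r) (q ^ n)) ?_
      (MvPolynomial.map_injective _ (algebraMap K K').injective)
    exact MvPolynomial.expand_injective (pow_pos hq n)
  · intro c hc
    have : ExpChar (MvPolynomial (Fin r) K') q := inferInstance
    suffices f0 c ∈ (iterateFrobenius (MvPolynomial (Fin r) K') q n).range by
      obtain ⟨d, hd⟩ := this
      exact ⟨d, by rw [← hd, iterateFrobenius_def]⟩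
    rw [c.as_sum, map_sum]
    refine sum_mem fun m hm => ?_
    rw [MvPolynomial.monomial_eq, map_mul, fC]
    refine mul_mem ?_ ?_
    · obtain ⟨d, hd⟩ := hroot c hc m hm
      exact ⟨MvPolynomial.C d, by rw [iterateFrobenius_def, ← hd, map_pow]⟩
    · rw [Finsupp.prod, map_prod]
      refine prod_mem fun i _ => ?_
      rw [map_pow, fX]
      have hX : (MvPolynomial.X i : MvPolynomial (Fin r) K') ^ (q ^ n) ∈
          (iterateFrobenius (MvPolynomial (Fin r) K') q n).range :=
        ⟨MvPolynomial.X i, by rw [iterateFrobenius_def]⟩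
      exact pow_mem hX _

theorem aux_sep_root {F F' Ω : Type*} [Field F] [Field F'] [Field Ω] [Algebra F F'] [Algebra F' Ω]
    [Algebra F Ω] [IsScalarTower F F' Ω] (q m : ℕ) [ExpChar F' q] [ExpChar Ω q]
    (g : Polynomial F) (hg : g.Separable) (a : Ω) (ha : Polynomial.aeval (a ^ q ^ m) g = 0)
    (hc : ∀ i, ∃ e : F', e ^ q ^ m = algebraMap F F' (g.coeff i)) : IsSeparable F' a := by
  have hl : g.map (algebraMap F F') ∈ Polynomial.lifts (iterateFrobenius F' q m) := by
    rw [Polynomial.lifts_iff_coeff_lifts]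
    intro i
    obtain ⟨e, he⟩ := hc i
    exact ⟨e, by rw [iterateFrobenius_def, he, Polynomial.coeff_map]⟩
  obtain ⟨g', hg'⟩ := (Polynomial.mem_lifts _).1 hl
  have hsep : g'.Separable := by
    rw [← Polynomial.separable_map (iterateFrobenius F' q m), hg', Polynomial.separable_map]
    exact hg
  have h0 : Polynomial.aeval a g' = 0 := by
    apply iterateFrobenius_inj Ω q m
    rw [map_zero, Polynomial.aeval_def, Polynomial.hom_eval₂]
    have e : (iterateFrobenius Ω q m).comp (algebraMap F' Ω) =
        (algebraMap F' Ω).comp (iterateFrobenius F' q m) := by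
      ext x; simp [iterateFrobenius_def]
    rw [e, ← Polynomial.eval₂_map, hg', Polynomial.eval₂_map, ← IsScalarTower.algebraMap_eq,
      iterateFrobenius_def, ← Polynomial.aeval_def, ha]
  exact hsep.of_dvd (minpoly.dvd _ _ h0)

theorem aux_noeth_field (R : Type u) [CommRing R] [IsDomain R] [IsNoetherianRing R] (q : ℕ)
    [ExpChar R q]
    (H : ∀ (n : ℕ) (s : Finset R), ∃ (R' : Type u) (_ : CommRing R') (_ : IsDomain R')
      (_ : IsIntegrallyClosed R') (_ : IsNoetherianRing R') (_ : Algebra R R'), ExpChar R' q ∧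
      Module.Finite R R' ∧ Function.Injective (algebraMap R R') ∧
        ∀ c ∈ s, ∃ d, d ^ (q ^ n) = algebraMap R R' c)
    (L : Type*) [Field L]
    [Algebra (FractionRing R) L]
    [FiniteDimensional (FractionRing R) L]
    [Algebra R L]
    [IsScalarTower R (FractionRing R) L] :
    IsNoetherian R (integralClosure R L) := by
  classical
  set F := FractionRing R with hF
  have : ExpChar F q := expChar_of_injective_algebraMap
    (IsFractionRing.injective R F) q
  obtain ⟨t, ht⟩ : ∃ t : Finset L, IntermediateField.adjoin F (t : Set L) = ⊤ :=
    IntermediateField.fg_top F L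
  have hcon : ∀ a : L, ∃ (g : Polynomial F) (m : ℕ), g.Separable ∧
      Polynomial.aeval (a ^ q ^ m) g = 0 := by
    intro a
    obtain ⟨g, hg, m, hm⟩ := (minpoly.irreducible
      (IsIntegral.of_finite F a)).hasSeparableContraction q
    refine ⟨g, m, hg, ?_⟩
    rw [← Polynomial.expand_aeval, hm, minpoly.aeval]
  choose g m hgs hg0 using hcon
  obtain ⟨n, hn⟩ : ∃ n, ∀ a ∈ t, m a ≤ n := ⟨t.sup m, fun a ha => Finset.le_sup ha⟩
  have hfr : ∀ c : F, ∃ x y : R, c = algebraMap R F x / algebraMap R F y := by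
    intro c
    obtain ⟨x, y, hy, h⟩ := IsFractionRing.div_surjective (A := R) c
    exact ⟨x, y, h.symm⟩
  choose num den hnd using hfr
  let s : Finset R := t.biUnion fun a => (g a).support.biUnion fun i =>
    {num ((g a).coeff i), den ((g a).coeff i)}
  obtain ⟨R', _, _, _, _, _, _, hfin, hinj, hs⟩ := H n s
  have : FaithfulSMul R R' := (faithfulSMul_iff_algebraMap_injective R R').2 hinj
  let F' := FractionRing R'
  let Ω := AlgebraicClosure F'
  have : ExpChar F' q := expChar_of_injective_algebraMap
    (IsFractionRing.injective R' F') q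
  have : ExpChar Ω q := expChar_of_injective_algebraMap
    (algebraMap F' Ω).injective q
  have : FaithfulSMul R F' := inferInstance
  let _ : Algebra F F' := FractionRing.liftAlgebra R F'
  have : IsScalarTower R F F' := FractionRing.isScalarTower_liftAlgebra R F'
  have : IsScalarTower R F Ω := IsScalarTower.of_algebraMap_eq fun x => by
    rw [IsScalarTower.algebraMap_apply R F' Ω, IsScalarTower.algebraMap_apply R F F',
      ← IsScalarTower.algebraMap_apply F F' Ω]
  let σ : L →ₐ[F] Ω := IsAlgClosed.lift
  have hsep : ∀ a ∈ t, IsSeparable F' (σ a) := by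
    intro a ha
    refine aux_sep_root (F := F) q (m a) (g a) (hgs a) (σ a) ?_ ?_
    · rw [← map_pow, Polynomial.aeval_algHom_apply, hg0, map_zero]
    · intro i
      by_cases hi : i ∈ (g a).support
      · have key : ∀ c ∈ s, ∃ e : F', e ^ q ^ m a = algebraMap R F' c := by
          intro c hc
          obtain ⟨d, hd⟩ := hs c hc
          refine ⟨algebraMap R' F' (d ^ q ^ (n - m a)), ?_⟩
          rw [← map_pow, ← pow_mul, ← pow_add, Nat.sub_add_cancel (hn a ha), hd,
            ← IsScalarTower.algebraMap_apply]
        obtain ⟨e1, h1⟩ := key (num ((g a).coeff i)) (Finset.mem_biUnion.2 ⟨a, ha,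
          Finset.mem_biUnion.2 ⟨i, hi, by simp⟩⟩)
        obtain ⟨e2, h2⟩ := key (den ((g a).coeff i)) (Finset.mem_biUnion.2 ⟨a, ha,
          Finset.mem_biUnion.2 ⟨i, hi, by simp⟩⟩)
        refine ⟨e1 / e2, ?_⟩
        rw [div_pow, h1, h2, hnd ((g a).coeff i), map_div₀, ← hnd,
          ← IsScalarTower.algebraMap_apply, ← IsScalarTower.algebraMap_apply]
      · rw [Polynomial.notMem_support_iff.1 hi]
        exact ⟨0, by rw [map_zero, zero_pow (pow_pos (expChar_pos F q) _).ne']⟩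
  let E : IntermediateField F' Ω := IntermediateField.adjoin F' (σ '' (t : Set L))
  have hEsep : Algebra.IsSeparable F' E := by
    rw [IntermediateField.isSeparable_adjoin_iff_isSeparable]
    rintro _ ⟨a, ha, rfl⟩
    exact hsep a ha
  have hEfin : FiniteDimensional F' E := by
    have : Finite (σ '' (t : Set L)) := (t.finite_toSet.image σ).to_subtype
    refine IntermediateField.finiteDimensional_adjoin ?_
    rintro _ ⟨a, ha, rfl⟩
    exact (hsep a ha).isIntegral
  have hσE : ∀ x : L, σ x ∈ E := by
    intro x
    have hx : x ∈ IntermediateField.adjoin F (t : Set L) := by rw [ht]; trivial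
    induction hx using IntermediateField.adjoin_induction with
    | mem x hx => exact IntermediateField.subset_adjoin _ _ ⟨x, hx, rfl⟩
    | algebraMap c =>
      rw [AlgHom.commutes, IsScalarTower.algebraMap_apply F F' Ω]
      exact E.algebraMap_mem _
    | add x y _ _ hx hy => rw [map_add]; exact add_mem hx hy
    | inv x _ hx => rw [map_inv₀]; exact inv_mem hx
    | mul x y _ _ hx hy => rw [map_mul]; exact mul_mem hx hy
  have hT : Module.Finite R' (integralClosure R' E) :=
    IsIntegralClosure.finite R' F' E (integralClosure R' E)
  let ι : E →ₐ[R'] Ω := E.val.restrictScalars R'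
  let M : Submodule R' Ω := (Subalgebra.toSubmodule (integralClosure R' E)).map ι.toLinearMap
  have hM : Module.Finite R' M := by
    rw [Module.Finite.iff_fg]
    exact Submodule.FG.map _ (Module.Finite.iff_fg.1 hT)
  have hMR : Module.Finite R M := Module.Finite.trans R' M
  have hMN : IsNoetherian R M := isNoetherian_of_isNoetherianRing_of_finite R M
  let σR : L →ₐ[R] Ω := σ.restrictScalars R
  have hmem : ∀ x : integralClosure R L, σR x ∈ M.restrictScalars R := by
    rintro ⟨x, hx⟩
    have h1 : IsIntegral R (σR x) := IsIntegral.map σR hx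
    have h2 : IsIntegral R' (σR x) := h1.tower_top
    have h3 : IsIntegral R' (⟨σ x, hσE x⟩ : E) := by
      rw [← isIntegral_algHom_iff ι (RingHom.injective ι.toRingHom)]
      exact h2
    exact ⟨_, h3, rfl⟩
  let Φ : integralClosure R L →ₗ[R] M.restrictScalars R :=
    (σR.toLinearMap.comp (Subalgebra.toSubmodule (integralClosure R L)).subtype).codRestrict _ hmem
  have hN2 : IsNoetherian R (M.restrictScalars R) := hMN
  refine isNoetherian_of_injective Φ ?_
  intro x y hxy
  have : σ x = σ y := congrArg Subtype.val hxy
  exact Subtype.ext (σ.injective this)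


theorem aux_noeth_domain (K : Type u) [Field K] (D : Type*) [CommRing D] [IsDomain D]
    [Algebra K D] [Algebra.FiniteType K D] :
    IsNoetherian D (integralClosure D (FractionRing D)) := by
  obtain ⟨r, f, hinj, hfin⟩ := exists_finite_inj_algHom_of_fg K D
  obtain ⟨q, hq⟩ := ExpChar.exists K
  let _ : Algebra (MvPolynomial (Fin r) K) D := f.toRingHom.toAlgebra
  have hfin' : Module.Finite (MvPolynomial (Fin r) K) D := hfin
  have : FaithfulSMul (MvPolynomial (Fin r) K) D :=
    (faithfulSMul_iff_algebraMap_injective _ _).2 hinj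
  let L := FractionRing D
  let _ : Algebra (FractionRing (MvPolynomial (Fin r) K)) L := FractionRing.liftAlgebra _ L
  have : IsScalarTower (MvPolynomial (Fin r) K) (FractionRing (MvPolynomial (Fin r) K)) L :=
    FractionRing.isScalarTower_liftAlgebra _ _
  have : FiniteDimensional (FractionRing (MvPolynomial (Fin r) K)) L := by
    have : Algebra.IsIntegral (MvPolynomial (Fin r) K) D := inferInstance
    have : Algebra.IsAlgebraic (FractionRing (MvPolynomial (Fin r) K)) L :=
      isAlgebraic_of_isFractionRing (MvPolynomial (Fin r) K) D _ L
    have h1 : Algebra.EssFiniteType D L := Algebra.EssFiniteType.of_isLocalization L D⁰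
    have h2 : Algebra.EssFiniteType (MvPolynomial (Fin r) K) L :=
      Algebra.EssFiniteType.comp _ D L
    have h3 : Algebra.EssFiniteType (FractionRing (MvPolynomial (Fin r) K)) L :=
      Algebra.EssFiniteType.of_comp (MvPolynomial (Fin r) K) _ L
    exact Algebra.finite_of_essFiniteType_of_isAlgebraic
  have h := aux_noeth_field (MvPolynomial (Fin r) K) q (by
    intro n s
    obtain ⟨K', _, f, hfin, hinj, _, hs⟩ := aux_root_ring K r q n s
    exact ⟨MvPolynomial (Fin r) K', inferInstance, inferInstance, inferInstance, inferInstance,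
      f.toAlgebra, inferInstance, hfin, hinj, hs⟩) L
  have hle : ∀ x : L, x ∈ integralClosure D L → x ∈ integralClosure (MvPolynomial (Fin r) K) L := by
    intro x hx
    have hx' : IsIntegral D x := hx
    exact isIntegral_trans (R := MvPolynomial (Fin r) K) x hx'
  have h2 : IsNoetherian (MvPolynomial (Fin r) K) (integralClosure D L) := by
    let Φ : integralClosure D L →ₗ[MvPolynomial (Fin r) K]
        (integralClosure (MvPolynomial (Fin r) K) L) :=
      { toFun := fun x => ⟨x.1, hle _ x.2⟩
        map_add' := fun x y => rfl
        map_smul' := fun c x => rfl }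
    refine isNoetherian_of_injective Φ ?_
    intro x y hxy
    have h3 : (Φ x).1 = (Φ y).1 := by rw [hxy]
    exact Subtype.ext h3
  exact isNoetherian_of_tower (MvPolynomial (Fin r) K) h2

theorem aux_noeth_reduced (K : Type u) [Field K] (A : Type*) [CommRing A] [IsReduced A]
    [Algebra K A] [Algebra.FiniteType K A] :
    IsNoetherian A (integralClosure A (FractionRing A)) := by
  have : IsNoetherianRing A := Algebra.FiniteType.isNoetherianRing K A
  have hfinp : Finite (minimalPrimes A) := (minimalPrimes.finite_of_isNoetherianRing A).to_subtype
  have hprime : ∀ p : minimalPrimes A, p.1.IsPrime := fun p => p.2.1.1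
  let φ : ∀ p : minimalPrimes A, FractionRing A →+* FractionRing (A ⧸ p.1) := fun p =>
    IsLocalization.lift (M := A⁰) (g := (algebraMap (A ⧸ p.1) (FractionRing (A ⧸ p.1))).comp
      (Ideal.Quotient.mk p.1)) (by
        have := hprime p
        intro y
        rw [RingHom.comp_apply, isUnit_iff_ne_zero, ne_eq,
          FaithfulSMul.algebraMap_eq_zero_iff, Ideal.Quotient.eq_zero_iff_mem]
        exact fun h => notMem_nonZeroDivisors_of_mem_mem_minimalPrimes h p.2 y.2)
  have hφ : ∀ p a, φ p (algebraMap A _ a) = algebraMap (A ⧸ p.1) _ (Ideal.Quotient.mk p.1 a) :=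
    fun p a => IsLocalization.lift_eq _ a
  have hφinj : ∀ x, (∀ p, φ p x = 0) → x = 0 := by
    intro x hx
    obtain ⟨a, s, rfl⟩ := IsLocalization.exists_mk'_eq A⁰ x
    have : a = 0 := by
      have h0 : a ∈ nilradical A := by
        have e : nilradical A = (⊥ : Ideal A).radical := rfl
        rw [e, ← Ideal.sInf_minimalPrimes, Ideal.mem_sInf]
        intro p hp
        have h1 := hx ⟨p, hp⟩
        have := hprime ⟨p, hp⟩
        have h2 := congrArg (φ ⟨p, hp⟩) (IsLocalization.mk'_spec (FractionRing A) a s)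
        rw [map_mul, h1, zero_mul, hφ] at h2
        have h3 := (FaithfulSMul.algebraMap_eq_zero_iff _ _).1 h2.symm
        exact Ideal.Quotient.eq_zero_iff_mem.1 h3
      rwa [nilradical_eq_zero] at h0
    rw [this, IsLocalization.mk'_zero]
  have hI : ∀ p x, x ∈ integralClosure A (FractionRing A) →
      φ p x ∈ integralClosure (A ⧸ p.1) (FractionRing (A ⧸ p.1)) := by
    intro p x hx
    obtain ⟨P, hP, hP2⟩ := hx
    refine ⟨P.map (Ideal.Quotient.mk p.1), hP.map _, ?_⟩
    have : (algebraMap (A ⧸ p.1) (FractionRing (A ⧸ p.1))).comp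
      (Ideal.Quotient.mk p.1) = (φ p).comp (algebraMap A _) := RingHom.ext fun a => (hφ p a).symm
    rw [Polynomial.eval₂_map, this, ← Polynomial.hom_eval₂, hP2, map_zero]
  have hN : ∀ p : minimalPrimes A,
      IsNoetherian A (integralClosure (A ⧸ p.1) (FractionRing (A ⧸ p.1))) := by
    intro p
    have := hprime p
    have := aux_noeth_domain K (A ⧸ p.1)
    have : Module.Finite A (integralClosure (A ⧸ p.1) (FractionRing (A ⧸ p.1))) :=
      Module.Finite.trans (A ⧸ p.1) _
    exact isNoetherian_of_isNoetherianRing_of_finite _ _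
  let Φ : integralClosure A (FractionRing A) →ₗ[A]
      (∀ p : minimalPrimes A, integralClosure (A ⧸ p.1) (FractionRing (A ⧸ p.1))) :=
    { toFun := fun x p => ⟨φ p x.1, hI p _ x.2⟩
      map_add' := fun x y => by ext p; simp
      map_smul' := fun c x => by
        ext p
        have h : φ p (c • x.1) = c • φ p x.1 := by
          rw [Algebra.smul_def, map_mul, hφ, Algebra.smul_def,
            IsScalarTower.algebraMap_apply A (A ⧸ p.1) (FractionRing (A ⧸ p.1))]
          rfl
        exact h }
  refine isNoetherian_of_injective Φ ?_
  rw [injective_iff_map_eq_zero]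
  intro x hx
  refine Subtype.ext (hφinj _ fun p => ?_)
  exact congrArg Subtype.val (congrFun hx p)

/-- The radical of `J·B` as an `A`-submodule of `Q`. -/
def radSub {A Q : Type*} [CommRing A] [CommRing Q] [Algebra A Q] (J : Ideal A)
    (B : Subalgebra A Q) : Submodule A Q :=
  ((J.map (algebraMap A B)).radical.restrictScalars A).map B.val.toLinearMap

theorem aux_mem_map {A Q : Type*} [CommRing A] [CommRing Q] [Algebra A Q] (J : Ideal A)
    (B : Subalgebra A Q) (b : B) :
    b ∈ J.map (algebraMap A B) ↔ (b : Q) ∈ J • Subalgebra.toSubmodule B := by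
  have h1 : b ∈ J.map (algebraMap A B) ↔ b ∈ (J • ⊤ : Submodule A B) := by
    rw [Ideal.smul_top_eq_map]; rfl
  have h2 : J • Subalgebra.toSubmodule B =
      (J • ⊤ : Submodule A B).map B.val.toLinearMap := by
    rw [Submodule.map_smul'', Submodule.map_top]
    congr 1
    ext x
    simp
  rw [h1, h2]
  constructor
  · intro h; exact ⟨b, h, rfl⟩
  · rintro ⟨c, hc, hcb⟩
    have : c = b := Subtype.ext hcb
    exact this ▸ hc

theorem mem_radSub {A Q : Type*} [CommRing A] [CommRing Q] [Algebra A Q] (J : Ideal A)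
    (B : Subalgebra A Q) (x : Q) :
    x ∈ radSub J B ↔ x ∈ B ∧ ∃ k : ℕ, x ^ (k + 1) ∈ J • Subalgebra.toSubmodule B := by
  constructor
  · rintro ⟨b, hb, rfl⟩
    obtain ⟨n, hn⟩ := hb
    refine ⟨b.2, n, ?_⟩
    have : b ^ (n + 1) ∈ J.map (algebraMap A B) := by
      rw [pow_succ]; exact Ideal.mul_mem_right _ _ hn
    exact (aux_mem_map J B _).1 this
  · rintro ⟨hx, k, hk⟩
    exact ⟨⟨x, hx⟩, ⟨k + 1, (aux_mem_map J B (⟨x, hx⟩ ^ (k + 1))).2 hk⟩, rfl⟩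

theorem mem_chain_succ (A : Type*) [CommRing A] (J : Ideal A) (n : ℕ) (x : FractionRing A) :
    x ∈ chainRing A J (n + 1) ↔
      ∀ j ∈ radSub J (chainRing A J n), x * j ∈ radSub J (chainRing A J n) := by
  constructor
  · rintro h j ⟨b, hb, rfl⟩
    obtain ⟨c, hc, hcb⟩ := h b hb
    exact ⟨c, hc, hcb⟩
  · intro h j hj
    obtain ⟨c, hc, hcb⟩ := h j ⟨j, hj, rfl⟩
    exact ⟨c, hc, hcb⟩

/-- Abstract localization data. -/
structure LocData {A A' Q Q' : Type*} [CommRing A] [CommRing A'] [CommRing Q] [CommRing Q']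
    [Algebra A Q] [Algebra A' Q'] (S : Submonoid A) (ι : A →+* A') (φ : Q →+* Q') : Prop where
  comm : ∀ a, φ (algebraMap A Q a) = algebraMap A' Q' (ι a)
  unit : ∀ s ∈ S, IsUnit (ι s)
  surjA : ∀ y : A', ∃ s ∈ S, ∃ a, y * ι s = ι a
  surjQ : ∀ y : Q', ∃ s ∈ S, ∃ x, y * φ (algebraMap A Q s) = φ x
  inj : ∀ x : Q, φ x = 0 → ∃ s ∈ S, algebraMap A Q s * x = 0

/-- The second set is the localization of the first one. -/
def LocRel {A Q Q' : Type*} [CommRing A] [CommRing Q] [CommRing Q']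
    [Algebra A Q] (S : Submonoid A) (φ : Q →+* Q') (X : Set Q) (X' : Set Q') : Prop :=
  ∀ y, y ∈ X' ↔ ∃ s ∈ S, ∃ x ∈ X, y * φ (algebraMap A Q s) = φ x

section loc

variable {A A' Q Q' : Type*} [CommRing A] [CommRing A'] [CommRing Q] [CommRing Q']
    [Algebra A Q] [Algebra A' Q'] {S : Submonoid A} {ι : A →+* A'} {φ : Q →+* Q'}

theorem LocRel.map_mem {X : Set Q} {X' : Set Q'} (h : LocRel S φ X X') {x : Q} (hx : x ∈ X) :
    φ x ∈ X' := (h _).2 ⟨1, S.one_mem, x, hx, by simp⟩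

theorem LocData.eq_imp (D : LocData S ι φ) {x y : Q} (h : φ x = φ y) :
    ∃ s ∈ S, algebraMap A Q s * x = algebraMap A Q s * y := by
  obtain ⟨s, hs, h⟩ := D.inj (x - y) (by rw [map_sub, h, sub_self])
  exact ⟨s, hs, by rw [← sub_eq_zero, ← mul_sub, h]⟩

theorem LocRel.mem_iff (D : LocData S ι φ) {X : Submodule A Q} {X' : Set Q'}
    (h : LocRel S φ (X : Set Q) X') {x : Q} :
    φ x ∈ X' ↔ ∃ s ∈ S, algebraMap A Q s * x ∈ X := by
  rw [h]
  constructor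
  · rintro ⟨s, hs, z, hz, he⟩
    rw [← map_mul] at he
    obtain ⟨t, ht, h2⟩ := D.eq_imp he
    refine ⟨t * s, S.mul_mem ht hs, ?_⟩
    have : algebraMap A Q (t * s) * x = t • z := by
      rw [Algebra.smul_def, ← h2, map_mul]; ring
    rw [this]
    exact X.smul_mem _ hz
  · rintro ⟨s, hs, hx⟩
    exact ⟨s, hs, _, hx, by rw [map_mul, mul_comm]⟩

theorem LocData.div_mem (D : LocData S ι φ) (X' : Submodule A' Q') {y : Q'} {s : A} (hs : s ∈ S)
    (h : y * φ (algebraMap A Q s) ∈ X') : y ∈ X' := by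
  obtain ⟨u, hu⟩ := D.unit s hs
  have : y = (↑u⁻¹ : A') • (y * φ (algebraMap A Q s)) := by
    rw [D.comm, ← hu, Algebra.smul_def, mul_comm y, ← mul_assoc, ← map_mul, Units.inv_mul,
      map_one, one_mul]
  rw [this]
  exact X'.smul_mem _ h

theorem LocRel.smul (D : LocData S ι φ) {B : Submodule A Q} {B' : Submodule A' Q'}
    (h : LocRel S φ (B : Set Q) (B' : Set Q')) {J : Ideal A} {J' : Ideal A'}
    (hJ : ∀ j ∈ J, ι j ∈ J') (hJ' : ∀ r ∈ J', ∃ s ∈ S, ∃ j ∈ J, r * ι s = ι j) :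
    LocRel S φ ((J • B : Submodule A Q) : Set Q) ((J' • B' : Submodule A' Q') : Set Q') := by
  intro y
  constructor
  · intro hy
    refine Submodule.smul_induction_on hy ?_ ?_
    · intro r hr b hb
      obtain ⟨s, hs, j, hj, e1⟩ := hJ' r hr
      obtain ⟨t, ht, x, hx, e2⟩ := (h b).1 hb
      refine ⟨s * t, S.mul_mem hs ht, j • x, Submodule.smul_mem_smul hj hx, ?_⟩
      rw [Algebra.smul_def, Algebra.smul_def, map_mul, map_mul, map_mul, ← e2, D.comm s, D.comm j,
        ← e1, map_mul]
      ring
    · rintro y1 y2 ⟨s, hs, x, hx, e1⟩ ⟨t, ht, z, hz, e2⟩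
      refine ⟨s * t, S.mul_mem hs ht, t • x + s • z,
        add_mem (Submodule.smul_mem _ _ hx) (Submodule.smul_mem _ _ hz), ?_⟩
      rw [Algebra.smul_def, Algebra.smul_def, map_mul, map_mul, map_add, map_mul, map_mul,
        ← e1, ← e2]
      ring
  · rintro ⟨s, hs, x, hx, e⟩
    refine D.div_mem _ hs ?_
    rw [e]
    refine Submodule.smul_induction_on hx ?_ ?_
    · intro r hr b hb
      have e3 : φ (r • b) = ι r • φ b := by
        rw [Algebra.smul_def, map_mul, D.comm, ← Algebra.smul_def]
      rw [e3]
      exact Submodule.smul_mem_smul (hJ r hr) (h.map_mem hb)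
    · intro x y hx hy
      rw [map_add]; exact add_mem hx hy

theorem LocRel.rad (D : LocData S ι φ) {B : Subalgebra A Q} {B' : Subalgebra A' Q'}
    (h : LocRel S φ (B : Set Q) (B' : Set Q')) {J : Ideal A} {J' : Ideal A'}
    (hJ : ∀ j ∈ J, ι j ∈ J') (hJ' : ∀ r ∈ J', ∃ s ∈ S, ∃ j ∈ J, r * ι s = ι j) :
    LocRel S φ (radSub J B : Set Q) (radSub J' B' : Set Q') := by
  have hs : LocRel S φ ((J • Subalgebra.toSubmodule B : Submodule A Q) : Set Q)
      ((J' • Subalgebra.toSubmodule B' : Submodule A' Q') : Set Q') :=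
    LocRel.smul D (B := Subalgebra.toSubmodule B) (B' := Subalgebra.toSubmodule B') h hJ hJ'
  intro y
  constructor
  · intro hy
    obtain ⟨hyB, k, hk⟩ := (mem_radSub J' B' y).1 hy
    obtain ⟨s, hs', x, hx, e⟩ := (h y).1 hyB
    have h1 : φ (x ^ (k + 1)) ∈ J' • Subalgebra.toSubmodule B' := by
      rw [map_pow, ← e, mul_pow, D.comm, ← map_pow, mul_comm, ← Algebra.smul_def]
      exact Submodule.smul_mem _ _ hk
    obtain ⟨t, ht, h2⟩ := (LocRel.mem_iff D hs).1 h1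
    refine ⟨t * s, S.mul_mem ht hs', t • x, ?_, ?_⟩
    · refine (mem_radSub J B _).2 ⟨Subalgebra.smul_mem _ hx t, k, ?_⟩
      have : (t • x) ^ (k + 1) = t ^ k • (algebraMap A Q t * x ^ (k + 1)) := by
        rw [Algebra.smul_def, Algebra.smul_def, mul_pow, map_pow]; ring
      rw [this]
      exact Submodule.smul_mem _ _ h2
    · rw [Algebra.smul_def, map_mul, map_mul, map_mul, ← e]; ring
  · rintro ⟨s, hs', x, hx, e⟩
    obtain ⟨hxB, k, hk⟩ := (mem_radSub J B x).1 hx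
    refine D.div_mem _ hs' ?_
    rw [e]
    refine (mem_radSub J' B' _).2 ⟨h.map_mem hxB, k, ?_⟩
    rw [← map_pow]
    exact hs.map_mem hk

theorem LocRel.endo (D : LocData S ι φ) {R : Submodule A Q} {R' : Submodule A' Q'}
    (h : LocRel S φ (R : Set Q) (R' : Set Q')) (hfg : R.FG) :
    LocRel S φ {x : Q | ∀ j ∈ R, x * j ∈ R} {y : Q' | ∀ j ∈ R', y * j ∈ R'} := by
  classical
  intro y
  constructor
  · intro hy
    obtain ⟨s, hs, x, e⟩ := D.surjQ y
    obtain ⟨G, hG⟩ := hfg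
    have h1 : ∀ r ∈ R, ∃ t ∈ S, algebraMap A Q t * (x * r) ∈ R := by
      intro r hr
      refine (LocRel.mem_iff D h).1 ?_
      rw [map_mul, ← e, D.comm, mul_right_comm, mul_comm, ← Algebra.smul_def]
      exact R'.smul_mem _ (hy _ (h.map_mem hr))
    have h2 : ∀ G' : Finset Q, (∀ r ∈ G', r ∈ R) → ∃ t ∈ S, ∀ r ∈ G',
        algebraMap A Q t * (x * r) ∈ R := by
      intro G'
      induction G' using Finset.induction_on with
      | empty => intro _; exact ⟨1, S.one_mem, by simp⟩
      | insert a G'' _ ih =>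
        intro hG'
        obtain ⟨t, ht, h3⟩ := ih fun r hr => hG' r (Finset.mem_insert_of_mem hr)
        obtain ⟨u, hu, h4⟩ := h1 a (hG' a (Finset.mem_insert_self _ _))
        refine ⟨t * u, S.mul_mem ht hu, ?_⟩
        intro r hr
        rcases Finset.mem_insert.1 hr with rfl | hr
        · rw [map_mul, mul_assoc, ← Algebra.smul_def]; exact R.smul_mem _ h4
        · rw [map_mul, mul_comm (algebraMap A Q t), mul_assoc, ← Algebra.smul_def]
          exact R.smul_mem _ (h3 r hr)
    obtain ⟨t, ht, h3⟩ := h2 G fun r hr => hG ▸ Submodule.subset_span hr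
    refine ⟨t * s, S.mul_mem ht hs, algebraMap A Q t * x, ?_, ?_⟩
    · intro j hj
      rw [← hG] at hj
      induction hj using Submodule.span_induction with
      | mem r hr => rw [mul_assoc]; exact h3 r hr
      | zero => rw [mul_zero]; exact R.zero_mem
      | add a b _ _ ha hb => rw [mul_add]; exact R.add_mem ha hb
      | smul c a _ ha => rw [mul_smul_comm]; exact R.smul_mem _ ha
    · rw [map_mul, map_mul, map_mul, ← e]; ring
  · rintro ⟨s, hs, x, hx, e⟩ j hj
    obtain ⟨t, ht, r, hr, e2⟩ := (h j).1 hj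
    refine D.div_mem R' (S.mul_mem hs ht) ?_
    have : y * j * φ (algebraMap A Q (s * t)) = φ (x * r) := by
      rw [map_mul, map_mul, map_mul, ← e, ← e2]; ring
    rw [this]
    exact h.map_mem (hx r hr)

end loc

theorem LocRel.chain {A A' : Type*} [CommRing A] [CommRing A'] {S : Submonoid A} {ι : A →+* A'}
    {φ : FractionRing A →+* FractionRing A'} (D : LocData S ι φ) {J : Ideal A} {J' : Ideal A'}
    (hJ : ∀ j ∈ J, ι j ∈ J') (hJ' : ∀ r ∈ J', ∃ s ∈ S, ∃ j ∈ J, r * ι s = ι j)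
    (hfg : ∀ n, (radSub J (chainRing A J n)).FG) (n : ℕ) :
    LocRel S φ (chainRing A J n : Set (FractionRing A))
      (chainRing A' J' n : Set (FractionRing A')) := by
  induction n with
  | zero =>
    intro y
    constructor
    · intro hy
      obtain ⟨a, rfl⟩ := Algebra.mem_bot.1 hy
      obtain ⟨s, hs, b, hb⟩ := D.surjA a
      refine ⟨s, hs, algebraMap _ _ b, Algebra.mem_bot.2 ⟨b, rfl⟩, ?_⟩
      rw [D.comm, D.comm, ← map_mul, hb]
    · rintro ⟨s, hs, x, hx, e⟩
      obtain ⟨a, rfl⟩ := Algebra.mem_bot.1 hx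
      refine D.div_mem (Subalgebra.toSubmodule (chainRing A' J' 0)) hs ?_
      rw [e, D.comm]
      exact Algebra.mem_bot.2 ⟨_, rfl⟩
  | succ n ih =>
    have h := LocRel.endo D (LocRel.rad D ih hJ hJ') (hfg n)
    intro y
    have e1 : y ∈ (chainRing A' J' (n + 1) : Set (FractionRing A')) ↔
        y ∈ {y | ∀ j ∈ radSub J' (chainRing A' J' n), y * j ∈ radSub J' (chainRing A' J' n)} :=
      mem_chain_succ A' J' n y
    rw [e1, h y]
    refine exists_congr fun s => and_congr_right fun _ => exists_congr fun x =>
      and_congr_left fun _ => ?_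
    exact (mem_chain_succ A J n x).symm


theorem aux_minimal {A : Type*} [CommRing A] [IsReduced A] [IsNoetherianRing A] (P : Ideal A)
    [hP : P.IsPrime] (h : ∀ g ∈ P, g ∉ A⁰) : P ∈ minimalPrimes A := by
  have hfin := minimalPrimes.finite_of_isNoetherianRing A
  have hsub : (P : Set A) ⊆ ⋃ i ∈ (hfin.toFinset : Set (Ideal A)), (i : Set A) := by
    intro a ha
    have h1 := h a ha
    rw [mem_nonZeroDivisors_iff_right] at h1
    push Not at h1
    obtain ⟨b, hb, hb0⟩ := h1
    have h2 : b ∉ (⊥ : Ideal A).radical := by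
      intro hb'
      have : b ∈ nilradical A := hb'
      rw [nilradical_eq_zero] at this
      exact hb0 this
    rw [← Ideal.sInf_minimalPrimes, Ideal.mem_sInf] at h2
    push Not at h2
    obtain ⟨p, hp, hbp⟩ := h2
    have hpp : p.IsPrime := hp.1.1
    refine Set.mem_biUnion (x := p) (by simpa using hp) ?_
    exact (hpp.mem_or_mem (hb ▸ p.zero_mem : b * a ∈ p)).resolve_left hbp
  have hpr : ∀ i ∈ hfin.toFinset, i ≠ (⊤ : Ideal A) → i ≠ ⊤ → i.IsPrime := by
    intro i hi _ _
    exact (hfin.mem_toFinset.1 hi).1.1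
  rw [Ideal.subset_union_prime ⊤ ⊤ hpr] at hsub
  obtain ⟨p, hp, hle⟩ := hsub
  have hp' := hfin.mem_toFinset.1 hp
  have : P = p := le_antisymm hle (hp'.2 ⟨hP, bot_le⟩ hle)
  rwa [this]

theorem aux_artin (A : Type*) [CommRing A] [IsReduced A] [IsNoetherianRing A] :
    IsArtinianRing (FractionRing A) := by
  have h1 : IsNoetherianRing (FractionRing A) :=
    IsLocalization.isNoetherianRing A⁰ _ inferInstance
  rw [isArtinianRing_iff_isNoetherianRing_krullDimLE_zero]
  refine ⟨h1, Ring.krullDimLE_zero_iff.2 ?_⟩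
  have key : ∀ I : Ideal (FractionRing A), I.IsPrime →
      I.comap (algebraMap A (FractionRing A)) ∈ minimalPrimes A := by
    intro I hI
    have : (I.comap (algebraMap A (FractionRing A))).IsPrime := Ideal.comap_isPrime _ _
    refine aux_minimal _ fun g hg hg0 => ?_
    exact hI.ne_top (Ideal.eq_top_of_isUnit_mem _ hg (IsLocalization.map_units _ ⟨g, hg0⟩))
  intro I hI
  obtain ⟨M, hM, hle⟩ := Ideal.exists_le_maximal I hI.ne_top
  have hI' := key I hI
  have hM' := key M hM.isPrime
  have h2 : I.comap (algebraMap A (FractionRing A)) = M.comap (algebraMap A (FractionRing A)) :=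
    le_antisymm (Ideal.comap_mono hle) (hM'.2 hI'.1 (Ideal.comap_mono hle))
  have : I = M := by
    have h2' : I.under A = M.under A := h2
    rw [← IsLocalization.map_under A⁰ (FractionRing A) I, h2', IsLocalization.map_under A⁰]
  rwa [this]

theorem aux_locData (A : Type*) [CommRing A] [IsReduced A] [IsNoetherianRing A] (P : Ideal A)
    [P.IsPrime] : ∃ φ : FractionRing A →+* FractionRing (Localization.AtPrime P),
      LocData P.primeCompl (algebraMap A (Localization.AtPrime P)) φ := by
  have hle : A⁰ ≤ (Localization.AtPrime P)⁰.comap (algebraMap A (Localization.AtPrime P)) := by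
    rw [← Submonoid.map_le_iff_le_comap]
    exact IsLocalization.map_nonZeroDivisors_le P.primeCompl _
  let φ : FractionRing A →+* FractionRing (Localization.AtPrime P) :=
    IsLocalization.map (M := A⁰) (T := (Localization.AtPrime P)⁰) _
      (algebraMap A (Localization.AtPrime P)) hle
  have hcomm : ∀ a, φ (algebraMap A _ a) =
      algebraMap (Localization.AtPrime P) _ (algebraMap A (Localization.AtPrime P) a) :=
    fun a => IsLocalization.map_eq _ a
  have hsA : ∀ y : Localization.AtPrime P, ∃ s ∈ P.primeCompl, ∃ a,
      y * algebraMap A (Localization.AtPrime P) s = algebraMap A (Localization.AtPrime P) a := by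
    intro y
    obtain ⟨⟨a, s⟩, h⟩ := IsLocalization.surj P.primeCompl y
    exact ⟨s, s.2, a, h⟩
  refine ⟨φ, hcomm, fun s hs => IsLocalization.map_units _ ⟨s, hs⟩, hsA, ?_, ?_⟩
  · intro y
    obtain ⟨a', d', rfl⟩ := IsLocalization.exists_mk'_eq (Localization.AtPrime P)⁰ y
    obtain ⟨s, hs, a, ea⟩ := hsA a'
    obtain ⟨t, ht, d, ed⟩ := hsA d'.1
    have hu : IsUnit (φ (algebraMap A _ d)) := by
      rw [hcomm, ← ed, map_mul]
      exact (IsLocalization.map_units _ d').mul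
        ((IsLocalization.map_units (Localization.AtPrime P)
          (⟨t, ht⟩ : P.primeCompl)).map (algebraMap (Localization.AtPrime P) _))
    have := aux_artin A
    obtain ⟨n, w, hw⟩ := IsArtinian.exists_pow_succ_smul_dvd
      (algebraMap A (FractionRing A) d) (1 : FractionRing A)
    have hw' : φ (algebraMap A _ d) * φ w = 1 := by
      have := congrArg φ hw
      simp only [Nat.succ_eq_add_one, smul_eq_mul, mul_one, map_mul, map_pow] at this
      rw [pow_succ, mul_assoc] at this
      exact (hu.pow n).mul_left_cancel (by rw [this, mul_one])
    refine ⟨s, hs, algebraMap A _ (a * t) * w, ?_⟩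
    have e1 := IsLocalization.mk'_spec (FractionRing (Localization.AtPrime P)) a' d'
    refine hu.mul_left_cancel ?_
    have e2 : φ (algebraMap A _ d) * φ (algebraMap A _ (a * t) * w) =
        φ (algebraMap A _ (a * t)) := by
      rw [map_mul, mul_left_comm, hw', mul_one]
    rw [e2, map_mul, map_mul, hcomm a, ← ea, hcomm d, ← ed,
      map_mul, map_mul, ← e1, hcomm, hcomm]
    ring
  · intro x hx
    obtain ⟨a, d, rfl⟩ := IsLocalization.exists_mk'_eq A⁰ x
    have h2 := congrArg φ (IsLocalization.mk'_spec (FractionRing A) a d)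
    rw [map_mul, hx, zero_mul, hcomm] at h2
    have h3 : algebraMap A (Localization.AtPrime P) a = 0 :=
      IsFractionRing.injective (Localization.AtPrime P) _ (by rw [← h2, map_zero])
    obtain ⟨s, hs⟩ := (IsLocalization.map_eq_zero_iff P.primeCompl _ a).1 h3
    refine ⟨s, s.2, ?_⟩
    refine (IsLocalization.map_units (FractionRing A) d).mul_right_cancel ?_
    rw [mul_assoc, IsLocalization.mk'_spec, ← map_mul, hs, map_zero, zero_mul]

section chain

variable {A : Type*} [CommRing A] {J : Ideal A}

theorem radSub_le (J : Ideal A) {Q : Type*} [CommRing Q] [Algebra A Q] (B : Subalgebra A Q) :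
    radSub J B ≤ Subalgebra.toSubmodule B := fun x hx => ((mem_radSub J B x).1 hx).1

theorem algebraMap_mem_radSub {Q : Type*} [CommRing Q] [Algebra A Q] (B : Subalgebra A Q)
    {g : A} (hg : g ∈ J) : algebraMap A Q g ∈ radSub J B := by
  refine (mem_radSub J B _).2 ⟨B.algebraMap_mem g, 0, ?_⟩
  have : algebraMap A Q g ^ (0 + 1) = g • (1 : Q) := by simp [Algebra.smul_def]
  rw [this]
  exact Submodule.smul_mem_smul hg B.one_mem

theorem mul_mem_radSub {Q : Type*} [CommRing Q] [Algebra A Q] (B : Subalgebra A Q)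
    {x j : Q} (hx : x ∈ B) (hj : j ∈ radSub J B) : x * j ∈ radSub J B := by
  obtain ⟨b, hb, rfl⟩ := hj
  exact ⟨⟨x, hx⟩ * b, Ideal.mul_mem_left _ _ hb, rfl⟩

theorem chain_le_succ (J : Ideal A) (n : ℕ) : chainRing A J n ≤ chainRing A J (n + 1) :=
  fun _ hx => (mem_chain_succ A J n _).2 fun _ hj => mul_mem_radSub _ hx hj

theorem chain_mono (J : Ideal A) : Monotone (chainRing A J) :=
  monotone_nat_of_le_succ (chain_le_succ J)

theorem mul_mem_chain {n : ℕ} {x : FractionRing A} (hx : x ∈ chainRing A J (n + 1)) {g : A}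
    (hg : g ∈ J) : algebraMap A _ g * x ∈ chainRing A J n := by
  rw [mul_comm]
  exact radSub_le J _ ((mem_chain_succ A J n x).1 hx _ (algebraMap_mem_radSub _ hg))

theorem chain_noeth [IsNoetherianRing A] {g : A} (hg : g ∈ J) (hg0 : g ∈ A⁰) (n : ℕ) :
    IsNoetherian A (chainRing A J n) := by
  induction n with
  | zero =>
    have : Module.Finite A (⊥ : Subalgebra A (FractionRing A)) := inferInstance
    exact isNoetherian_of_isNoetherianRing_of_finite A (⊥ : Subalgebra A (FractionRing A))
  | succ n ih =>
    let Φ : chainRing A J (n + 1) →ₗ[A] chainRing A J n :=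
      { toFun := fun x => ⟨algebraMap A _ g * x.1, mul_mem_chain x.2 hg⟩
        map_add' := fun x y => Subtype.ext (mul_add _ _ _)
        map_smul' := fun c x => Subtype.ext (mul_smul_comm _ _ _) }
    refine isNoetherian_of_injective Φ ?_
    intro x y hxy
    have h : algebraMap A (FractionRing A) g * x.1 = algebraMap A _ g * y.1 := by
      have h3 : (Φ x).1 = (Φ y).1 := by rw [hxy]
      exact h3
    exact Subtype.ext ((IsLocalization.map_units _ (⟨g, hg0⟩ : A⁰)).mul_left_cancel h)

theorem radSub_fg [IsNoetherianRing A] {g : A} (hg : g ∈ J) (hg0 : g ∈ A⁰) (n : ℕ) :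
    (radSub J (chainRing A J n)).FG := by
  have h := chain_noeth hg hg0 n
  have h2 : IsNoetherian A (Subalgebra.toSubmodule (chainRing A J n)) := h
  exact (isNoetherian_submodule.1 h2) _ (radSub_le J _)

theorem chain_le_integral [IsNoetherianRing A] {g : A} (hg : g ∈ J) (hg0 : g ∈ A⁰) (n : ℕ) :
    chainRing A J n ≤ integralClosure A (FractionRing A) := by
  intro x hx
  have h := chain_noeth hg hg0 n
  have h2 : IsNoetherian A (Subalgebra.toSubmodule (chainRing A J n)) := h
  exact IsIntegral.of_mem_of_fg _ ((isNoetherian_submodule.1 h2) _ le_rfl) x hx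

theorem chain_stab [IsNoetherianRing A] {g : A} (hg : g ∈ J) (hg0 : g ∈ A⁰)
    (hN : IsNoetherian A (integralClosure A (FractionRing A))) :
    ∃ n, chainRing A J n = chainRing A J (n + 1) := by
  have hN' : IsNoetherian A (Subalgebra.toSubmodule (integralClosure A (FractionRing A))) := hN
  let f : ℕ →o Submodule A (Subalgebra.toSubmodule (integralClosure A (FractionRing A))) :=
    ⟨fun n => (Subalgebra.toSubmodule (chainRing A J n)).submoduleOf _,
      fun a b hab => Submodule.comap_mono (chain_mono J hab)⟩
  obtain ⟨n, hn⟩ := monotone_stabilizes_iff_noetherian.2 hN' f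
  refine ⟨n, le_antisymm (chain_le_succ J n) fun x hx => ?_⟩
  have h1 : (⟨x, chain_le_integral hg hg0 (n + 1) hx⟩ :
      Subalgebra.toSubmodule (integralClosure A (FractionRing A))) ∈ f (n + 1) := hx
  rw [← hn (n + 1) (Nat.le_succ n)] at h1
  exact h1

theorem chain_stab_succ {n : ℕ} (h : chainRing A J n = chainRing A J (n + 1)) :
    chainRing A J (n + 1) = chainRing A J (n + 1 + 1) :=
  congrArg (fun B => endStep A B ((J.map (algebraMap A B)).radical)) h

theorem chain_stab_le {n m : ℕ} (h : chainRing A J n = chainRing A J (n + 1)) (hnm : n ≤ m) :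
    chainRing A J m = chainRing A J (m + 1) := by
  induction m, hnm using Nat.le_induction with
  | base => exact h
  | succ m _ ih => exact chain_stab_succ ih

end chain



theorem aux_prime_max {R : Type*} [CommRing R] [Ring.KrullDimLE 1 R] {p : Ideal R}
    (hp : p.IsPrime) {a : R} (ha : a ∈ p) (ha0 : a ∈ R⁰) : p.IsMaximal := by
  rcases Ring.krullDimLE_one_iff.1 ‹_› p hp with h | h
  · exact absurd ha0 (notMem_nonZeroDivisors_of_mem_mem_minimalPrimes ha h)
  · exact h

theorem aux_rad_local {R : Type*} [CommRing R] [IsLocalRing R] [Ring.KrullDimLE 1 R] {I : Ideal R}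
    {a : R} (ha : a ∈ I) (ha0 : a ∈ R⁰) (hI : I ≠ ⊤) :
    I.radical = IsLocalRing.maximalIdeal R := by
  refine le_antisymm ?_ ?_
  · exact (IsLocalRing.maximalIdeal.isMaximal R).isPrime.radical_le_iff.2
      (IsLocalRing.le_maximalIdeal hI)
  · rw [Ideal.radical_eq_sInf]
    refine le_sInf ?_
    rintro p ⟨hIp, hp⟩
    have := aux_prime_max hp (hIp ha) ha0
    exact (IsLocalRing.eq_maximalIdeal this).ge

theorem mem_radSub_zero {R : Type*} [CommRing R] {m : Ideal R} (hm : m.IsRadical)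
    (x : FractionRing R) :
    x ∈ radSub m (chainRing R m 0) ↔ ∃ r ∈ m, algebraMap R (FractionRing R) r = x := by
  constructor
  · intro hx
    obtain ⟨h1, k, hk⟩ := (mem_radSub _ _ _).1 hx
    obtain ⟨r, rfl⟩ := Algebra.mem_bot.1 h1
    refine ⟨r, ?_, rfl⟩
    have h2 : ∀ y ∈ m • Subalgebra.toSubmodule (chainRing R m 0),
        ∃ j ∈ m, algebraMap R (FractionRing R) j = y := by
      intro y hy
      refine Submodule.smul_induction_on hy ?_ ?_
      · intro c hc n hn
        obtain ⟨t, rfl⟩ := Algebra.mem_bot.1 hn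
        exact ⟨c * t, m.mul_mem_right _ hc, by rw [map_mul, Algebra.smul_def]⟩
      · rintro _ _ ⟨c, hc, rfl⟩ ⟨d, hd, rfl⟩
        exact ⟨c + d, m.add_mem hc hd, map_add _ _ _⟩
    obtain ⟨j, hj, he⟩ := h2 _ hk
    rw [← map_pow] at he
    have := IsFractionRing.injective R (FractionRing R) he
    exact hm ⟨k + 1, this ▸ hj⟩
  · rintro ⟨r, hr, rfl⟩
    exact algebraMap_mem_radSub _ hr

theorem aux_reg_stab {R : Type*} [CommRing R] [IsLocalRing R] (hd : ringKrullDim R = 1)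
    {g : R} (hg : g ∈ IsLocalRing.maximalIdeal R) (hg0 : g ∈ R⁰) (hR : IsRegularLocal R) :
    chainRing R (IsLocalRing.maximalIdeal R) 0 = chainRing R (IsLocalRing.maximalIdeal R) 1 := by
  obtain ⟨_, s, hs, hc⟩ := hR
  rw [hd] at hc
  have hc1 : s.card = 1 := by exact_mod_cast hc
  obtain ⟨t, rfl⟩ := Finset.card_eq_one.1 hc1
  rw [Finset.coe_singleton] at hs
  have ht : t ∈ IsLocalRing.maximalIdeal R := hs ▸ Ideal.mem_span_singleton_self t
  have hm : (IsLocalRing.maximalIdeal R).IsRadical :=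
    (IsLocalRing.maximalIdeal.isMaximal R).isPrime.isRadical
  refine le_antisymm (chain_le_succ _ 0) fun x hx => ?_
  have h1 := (mem_chain_succ _ _ _ _).1 hx _ ((mem_radSub_zero hm _).2 ⟨t, ht, rfl⟩)
  obtain ⟨r, hr, he⟩ := (mem_radSub_zero hm _).1 h1
  rw [← hs] at hr hg
  obtain ⟨c, rfl⟩ := Ideal.mem_span_singleton'.1 hr
  obtain ⟨d, rfl⟩ := Ideal.mem_span_singleton'.1 hg
  have ht0 : t ∈ R⁰ := (mul_mem_nonZeroDivisors.1 hg0).2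
  refine Algebra.mem_bot.2 ⟨c, ?_⟩
  rw [map_mul] at he
  exact (IsLocalization.map_units (FractionRing R) (⟨t, ht0⟩ : R⁰)).mul_right_cancel he

theorem aux_stab_reg {R : Type*} [CommRing R] [IsLocalRing R] [IsNoetherianRing R]
    (hd : ringKrullDim R = 1)
    {a : R} (ha : a ∈ IsLocalRing.maximalIdeal R) (ha0 : a ∈ R⁰)
    (h : chainRing R (IsLocalRing.maximalIdeal R) 0 =
      chainRing R (IsLocalRing.maximalIdeal R) 1) : IsRegularLocal R := by
  have hK : Ring.KrullDimLE 1 R := (Ring.krullDimLE_iff).2 (by rw [hd]; rfl)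
  have hm : (IsLocalRing.maximalIdeal R).IsRadical :=
    (IsLocalRing.maximalIdeal.isMaximal R).isPrime.isRadical
  have hua := IsLocalization.map_units (FractionRing R) (⟨a, ha0⟩ : R⁰)
  have hI : Ideal.span {a} ≠ ⊤ := by
    intro h1
    rw [Ideal.span_singleton_eq_top] at h1
    exact (IsLocalRing.mem_maximalIdeal a).1 ha h1
  have hpow : ∃ k, IsLocalRing.maximalIdeal R ^ k ≤ Ideal.span {a} := by
    rw [← aux_rad_local (Ideal.mem_span_singleton_self a) ha0 hI]
    exact Ideal.exists_radical_pow_le_of_fg _ (IsNoetherian.noetherian _)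
  classical
  have hk := Nat.find_spec hpow
  have hmin := fun m => Nat.find_min (m := m) hpow
  generalize Nat.find hpow = k at hk hmin
  obtain _ | k := k
  · rw [pow_zero, Ideal.one_eq_top, top_le_iff] at hk
    exact absurd hk hI
  have h1 := hmin k (Nat.lt_succ_self k)
  obtain ⟨b, hb, hba⟩ := SetLike.not_le_iff_exists.1 h1
  have hbm : ∀ z ∈ IsLocalRing.maximalIdeal R, ∃ c, c * a = b * z := fun z hz =>
    Ideal.mem_span_singleton'.1 (hk (by rw [pow_succ]; exact Ideal.mul_mem_mul hb hz))
  by_cases hz : ∃ z ∈ IsLocalRing.maximalIdeal R, ∃ c, IsUnit c ∧ c * a = b * z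
  · obtain ⟨z, hz, c, ⟨c, rfl⟩, hc⟩ := hz
    refine ⟨inferInstance, {z}, ?_, by rw [hd]; simp⟩
    rw [Finset.coe_singleton]
    refine le_antisymm ((Ideal.span_singleton_le_iff_mem _).2 hz) fun y hy => ?_
    obtain ⟨d, hd⟩ := hbm y hy
    have hb0 : b ∈ R⁰ := by
      have : (c : R) * a ∈ R⁰ := mul_mem_nonZeroDivisors.2 ⟨c.isUnit.mem_nonZeroDivisors, ha0⟩
      rw [hc] at this
      exact (mul_mem_nonZeroDivisors.1 this).1
    refine Ideal.mem_span_singleton'.2 ⟨d * ↑c⁻¹, ?_⟩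
    refine (mul_cancel_left_mem_nonZeroDivisors hb0).1 ?_
    rw [mul_left_comm, ← hc, ← hd, mul_assoc, Units.inv_mul_cancel_left]
  · exfalso
    push Not at hz
    have hx : IsLocalization.mk' (FractionRing R) b (⟨a, ha0⟩ : R⁰) ∈
        chainRing R (IsLocalRing.maximalIdeal R) 1 := by
      rw [mem_chain_succ]
      intro j hj
      obtain ⟨z, hzm, rfl⟩ := (mem_radSub_zero hm _).1 hj
      obtain ⟨c, hc⟩ := hbm z hzm
      refine (mem_radSub_zero hm _).2 ⟨c, ?_, ?_⟩
      · rw [IsLocalRing.mem_maximalIdeal]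
        exact fun hu => hz z hzm c hu hc
      · refine hua.mul_right_cancel ?_
        rw [mul_right_comm, IsLocalization.mk'_spec, ← map_mul, ← map_mul, ← hc]
    rw [← h] at hx
    obtain ⟨r, hr⟩ := Algebra.mem_bot.1 hx
    have h2 := IsLocalization.mk'_spec (FractionRing R) b (⟨a, ha0⟩ : R⁰)
    rw [← hr, ← map_mul] at h2
    exact hba (Ideal.mem_span_singleton'.2 ⟨r, IsFractionRing.injective R (FractionRing R) h2⟩)

theorem aux_dim {A : Type*} [CommRing A]
    (hdim : ∀ M : PrimeSpectrum A, M.asIdeal.IsMaximal →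
      ringKrullDim (Localization.AtPrime M.asIdeal) = 1) : Ring.KrullDimLE 1 A := by
  rw [Ring.krullDimLE_iff, ringKrullDim_le_iff_isMaximal_height_le]
  intro m hm
  have := hdim ⟨m, hm.isPrime⟩ hm
  rw [IsLocalization.AtPrime.ringKrullDim_eq_height m] at this
  exact_mod_cast this.le

theorem aux_map_nzd {A : Type*} [CommRing A] (P : Ideal A) [P.IsPrime] {g : A} (hg : g ∈ A⁰) :
    algebraMap A (Localization.AtPrime P) g ∈ (Localization.AtPrime P)⁰ :=
  IsLocalization.map_nonZeroDivisors_le P.primeCompl _ (Submonoid.mem_map_of_mem _ hg)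

theorem aux_mem_max {A : Type*} [CommRing A] (P : Ideal A) [P.IsPrime] {g : A} (hg : g ∈ P) :
    algebraMap A (Localization.AtPrime P) g ∈
      IsLocalRing.maximalIdeal (Localization.AtPrime P) := by
  rw [← Localization.AtPrime.map_eq_maximalIdeal]
  exact Ideal.mem_map_of_mem _ hg

theorem aux_map_eq {A : Type*} [CommRing A] (P : Ideal A) [P.IsPrime]
    (hd : ringKrullDim (Localization.AtPrime P) = 1) {J : Ideal A} (hJ : J.IsRadical)
    {g : A} (hg : g ∈ J) (hg0 : g ∈ A⁰) (hJP : J ≤ P) :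
    J.map (algebraMap A (Localization.AtPrime P)) =
      IsLocalRing.maximalIdeal (Localization.AtPrime P) := by
  have hK : Ring.KrullDimLE 1 (Localization.AtPrime P) :=
    (Ring.krullDimLE_iff).2 (by rw [hd]; rfl)
  rw [← aux_rad_local (Ideal.mem_map_of_mem (algebraMap A (Localization.AtPrime P)) hg)
    (aux_map_nzd P hg0) ?_, ← IsLocalization.map_radical P.primeCompl, hJ.radical]
  intro h
  have h2 := Ideal.map_mono (f := algebraMap A (Localization.AtPrime P)) hJP
  rw [h, top_le_iff, Localization.AtPrime.map_eq_maximalIdeal] at h2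
  exact (IsLocalRing.maximalIdeal.isMaximal _).ne_top h2

theorem aux_locRel {A : Type*} [CommRing A] [IsReduced A] [IsNoetherianRing A] (P : Ideal A)
    [P.IsPrime]
    (hd : ringKrullDim (Localization.AtPrime P) = 1) {J : Ideal A} (hJ : J.IsRadical)
    {g : A} (hg : g ∈ J) (hg0 : g ∈ A⁰) (hJP : J ≤ P) :
    ∃ φ : FractionRing A →+* FractionRing (Localization.AtPrime P),
      LocData P.primeCompl (algebraMap A (Localization.AtPrime P)) φ ∧
      ∀ n, LocRel P.primeCompl φ (chainRing A J n : Set (FractionRing A))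
        (chainRing (Localization.AtPrime P) (IsLocalRing.maximalIdeal (Localization.AtPrime P)) n :
          Set (FractionRing (Localization.AtPrime P))) := by
  obtain ⟨φ, D⟩ := aux_locData A P
  refine ⟨φ, D, LocRel.chain D (fun j hj => aux_mem_max P (hJP hj)) ?_ (radSub_fg hg hg0)⟩
  intro r hr
  rw [← aux_map_eq P hd hJ hg hg0 hJP, IsLocalization.mem_map_algebraMap_iff P.primeCompl] at hr
  obtain ⟨⟨j, s⟩, h⟩ := hr
  exact ⟨s, s.2, j, j.2, h⟩

theorem aux_stab_loc {A : Type*} [CommRing A] [IsReduced A] [IsNoetherianRing A] (P : Ideal A)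
    [P.IsPrime]
    (hd : ringKrullDim (Localization.AtPrime P) = 1) {J : Ideal A} (hJ : J.IsRadical)
    {g : A} (hg : g ∈ J) (hg0 : g ∈ A⁰) (hJP : J ≤ P) {n : ℕ}
    (h : ∀ x ∈ chainRing A J (n + 1), ∃ s ∈ P.primeCompl,
      algebraMap A (FractionRing A) s * x ∈ chainRing A J n) :
    chainRing (Localization.AtPrime P) (IsLocalRing.maximalIdeal (Localization.AtPrime P)) n =
      chainRing (Localization.AtPrime P)
        (IsLocalRing.maximalIdeal (Localization.AtPrime P)) (n + 1) := by
  obtain ⟨φ, D, H⟩ := aux_locRel P hd hJ hg hg0 hJP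
  refine le_antisymm (chain_le_succ _ n) fun y hy => ?_
  obtain ⟨s, hs, x, hx, he⟩ := (H (n + 1) y).1 hy
  obtain ⟨t, ht, hx'⟩ := h x hx
  refine (H n y).2 ⟨t * s, mul_mem ht hs, _, hx', ?_⟩
  rw [map_mul, map_mul, map_mul, mul_left_comm, he]

theorem aux_sing {A : Type*} [CommRing A] [IsReduced A] [IsNoetherianRing A]
    (hdim : ∀ M : PrimeSpectrum A, M.asIdeal.IsMaximal →
      ringKrullDim (Localization.AtPrime M.asIdeal) = 1) (P : PrimeSpectrum A)
    (hP : P ∈ singLocus A) : conductorIdeal A ≤ P.asIdeal ∧ P.asIdeal.IsMaximal := by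
  have hK := aux_dim hdim
  by_cases hmin : P.asIdeal ∈ minimalPrimes A
  · exfalso
    have hsub := IsLocalization.subsingleton_primeSpectrum_of_mem_minimalPrimes P.asIdeal hmin
      (Localization.AtPrime P.asIdeal)
    have hf : IsField (Localization.AtPrime P.asIdeal) := by
      have hn : nilradical (Localization.AtPrime P.asIdeal) = ⊥ := nilradical_eq_zero _
      rw [IsLocalRing.isField_iff_maximalIdeal_eq, eq_bot_iff, ← hn,
        nilradical_eq_sInf]
      refine le_sInf fun p hp => ?_
      have := Subsingleton.elim (⟨p, hp⟩ : PrimeSpectrum (Localization.AtPrime P.asIdeal))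
        ⟨IsLocalRing.maximalIdeal _, (IsLocalRing.maximalIdeal.isMaximal _).isPrime⟩
      exact (congrArg PrimeSpectrum.asIdeal this).ge
    refine hP ⟨inferInstance, ∅, ?_, ?_⟩
    · rw [IsLocalRing.isField_iff_maximalIdeal_eq.1 hf]; simp
    · rw [ringKrullDim_eq_zero_of_isField hf]; simp
  · have hmax : P.asIdeal.IsMaximal :=
      (Ring.krullDimLE_one_iff.1 hK P.asIdeal P.2).resolve_left hmin
    refine ⟨?_, hmax⟩
    have h2 : ∃ g ∈ P.asIdeal, g ∈ A⁰ := by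
      by_contra! h
      exact hmin (aux_minimal _ h)
    obtain ⟨g, hg, hg0⟩ := h2
    by_contra hle
    obtain ⟨c, hc, hcP⟩ := SetLike.not_le_iff_exists.1 hle
    refine hP (aux_stab_reg (hdim P hmax) (aux_mem_max _ hg) (aux_map_nzd _ hg0) ?_)
    refine aux_stab_loc P.asIdeal (hdim P hmax) P.2.isRadical hg hg0 le_rfl ?_
    intro x hx
    refine ⟨c, hcP, ?_⟩
    obtain ⟨r, hr⟩ := hc x (chain_le_integral hg hg0 _ hx)
    exact Algebra.mem_bot.2 ⟨r, hr⟩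


/-- Let `K` be a field and `A` a reduced finitely generated
`K`-algebra of pure Krull dimension one which is not integrally closed in `Q(A)`.
Then for every test ideal `J` for `A`,
`n(A, J) = max_{P ∈ Sing(A)} n(A_P, P·A_P)`; in particular `n(A, J)` is independent
of the choice of `J`. -/
theorem nSteps_curve_independent_of_test_ideal
    (K : Type*) [Field K] (A : Type*) [CommRing A] [IsReduced A] [Algebra K A]
    [Algebra.FiniteType K A]
    (hdim : ∀ M : PrimeSpectrum A, M.asIdeal.IsMaximal →
      ringKrullDim (Localization.AtPrime M.asIdeal) = 1)
    (hmin : ∀ P ∈ minimalPrimes A, ringKrullDim (A ⧸ P) ≠ 0)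
    (hnotnormal : integralClosure A (FractionRing A) ≠ ⊥) :
    ∀ J : Ideal A, IsTestIdeal A J →
      nSteps A J = sSup {m : ℕ | ∃ P ∈ singLocus A,
        m = nSteps (Localization.AtPrime P.asIdeal)
              (IsLocalRing.maximalIdeal (Localization.AtPrime P.asIdeal))} := by
  intro J hJ
  obtain ⟨⟨g, hg, hg0⟩, hrad, hV⟩ := hJ
  have hNoeth : IsNoetherianRing A := Algebra.FiniteType.isNoetherianRing K A
  have hK := aux_dim hdim
  have hmaxJ : ∀ P : PrimeSpectrum A, J ≤ P.asIdeal → P.asIdeal.IsMaximal :=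
    fun P hP => aux_prime_max P.2 (hP hg) hg0
  have hsing : ∀ P ∈ singLocus A, J ≤ P.asIdeal := fun P hP =>
    hV (show (conductorIdeal A : Set A) ⊆ P.asIdeal from (aux_sing hdim P hP).1)
  have hU1 : ∀ n, chainRing A J n = chainRing A J (n + 1) → ∀ P ∈ singLocus A,
      chainRing (Localization.AtPrime P.asIdeal)
        (IsLocalRing.maximalIdeal (Localization.AtPrime P.asIdeal)) n =
      chainRing (Localization.AtPrime P.asIdeal)
        (IsLocalRing.maximalIdeal (Localization.AtPrime P.asIdeal)) (n + 1) := by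
    intro n hn P hP
    have hJP := hsing P hP
    refine aux_stab_loc P.asIdeal (hdim P (hmaxJ P hJP)) hrad hg hg0 hJP fun x hx => ?_
    refine ⟨1, one_mem _, ?_⟩
    rw [map_one, one_mul, hn]
    exact hx
  have hU2 : ∀ n, (∀ P ∈ singLocus A,
      chainRing (Localization.AtPrime P.asIdeal)
        (IsLocalRing.maximalIdeal (Localization.AtPrime P.asIdeal)) n =
      chainRing (Localization.AtPrime P.asIdeal)
        (IsLocalRing.maximalIdeal (Localization.AtPrime P.asIdeal)) (n + 1)) →
      chainRing A J n = chainRing A J (n + 1) := by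
    intro n hn
    refine le_antisymm (chain_le_succ J n) fun x hx => ?_
    let I : Ideal A := (Subalgebra.toSubmodule (chainRing A J n)).comap
      (LinearMap.toSpanSingleton A (FractionRing A) x)
    have hI : ∀ a, a ∈ I ↔ algebraMap A (FractionRing A) a * x ∈ chainRing A J n := by
      intro a
      rw [← Algebra.smul_def]
      rfl
    suffices h : I = ⊤ by
      have h1 := (hI 1).1 (h ▸ Submodule.mem_top)
      rwa [map_one, one_mul] at h1
    by_contra hne
    obtain ⟨M, hM, hle⟩ := Ideal.exists_le_maximal I hne
    suffices h : ∃ s ∈ M.primeCompl, algebraMap A (FractionRing A) s * x ∈ chainRing A J n by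
      obtain ⟨s, hs, hsx⟩ := h
      exact hs (hle ((hI s).2 hsx))
    by_cases hJM : J ≤ M
    · have hd := hdim ⟨M, hM.isPrime⟩ hM
      have hloc : chainRing (Localization.AtPrime M)
          (IsLocalRing.maximalIdeal (Localization.AtPrime M)) n =
        chainRing (Localization.AtPrime M)
          (IsLocalRing.maximalIdeal (Localization.AtPrime M)) (n + 1) := by
        by_cases hS : (⟨M, hM.isPrime⟩ : PrimeSpectrum A) ∈ singLocus A
        · exact hn _ hS
        · have hR : IsRegularLocal (Localization.AtPrime M) := not_not.1 hS
          exact chain_stab_le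
            (aux_reg_stab hd (aux_mem_max M (hJM hg)) (aux_map_nzd M hg0) hR) (Nat.zero_le n)
      obtain ⟨φ, D, H⟩ := aux_locRel M hd hrad hg hg0 hJM
      have h1 : φ x ∈ chainRing (Localization.AtPrime M)
          (IsLocalRing.maximalIdeal (Localization.AtPrime M)) n := by
        rw [hloc]
        exact (H (n + 1)).map_mem hx
      exact (LocRel.mem_iff D (X := Subalgebra.toSubmodule (chainRing A J n)) (H n)).1 h1
    · obtain ⟨s, hs, hsM⟩ := SetLike.not_le_iff_exists.1 hJM
      exact ⟨s, hsM, mul_mem_chain hx hs⟩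
  have hne : ∃ n, chainRing A J n = chainRing A J (n + 1) :=
    chain_stab hg hg0 (aux_noeth_reduced K A)
  have hle : ∀ m ∈ {m : ℕ | ∃ P ∈ singLocus A,
        m = nSteps (Localization.AtPrime P.asIdeal)
              (IsLocalRing.maximalIdeal (Localization.AtPrime P.asIdeal))}, m ≤ nSteps A J := by
    rintro m ⟨P, hP, rfl⟩
    exact Nat.sInf_le (hU1 _ (Nat.sInf_mem hne) P hP)
  refine le_antisymm (Nat.sInf_le (hU2 _ fun P hP => ?_)) (csSup_le' hle)
  have h1 := le_csSup (show BddAbove _ from ⟨_, hle⟩) ⟨P, hP, rfl⟩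
  obtain ⟨n, hn⟩ := hne
  have h2 := Nat.sInf_mem (s := {n | chainRing (Localization.AtPrime P.asIdeal)
        (IsLocalRing.maximalIdeal (Localization.AtPrime P.asIdeal)) n =
      chainRing (Localization.AtPrime P.asIdeal)
        (IsLocalRing.maximalIdeal (Localization.AtPrime P.asIdeal)) (n + 1)})
    ⟨n, hU1 n hn P hP⟩
  exact chain_stab_le h2 h1
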